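/- (Gaussian max anti-concentration, as used in the paper) Let $(Z_1, \ldots, Z_p)$ be a centered Gaussian vector with $E[Z_j^2] = \sigma^2$ for all $j$, where $p \ge 2$. Then for every $\epsilon > 0$, $\sup_{x \in \mathbb{R}} P(\max_{1 \le j \le p} Z_j \in [x - \epsilon, x + \epsilon]) \le 12\epsilon\sqrt{\log p}/\sigma$. -/

import Mathlib

open MeasureTheory ProbabilityTheory

lemma aux_indep {Ω : Type*} [MeasurableSpace Ω] (P : Measure Ω) [IsProbabilityMeasure P]
    (p : ℕ) (W : Fin p → Ω → ℝ)
    (hG : HasGaussianLaw (fun ω => (W · ω)) P)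
    (hlaw : ∀ j, P.map (W j) = gaussianReal 0 1) (j : Fin p) :
    IndepFun (W j) (fun ω i => W i ω - cov[W j, W i; P] * W j ω) P := by
  have hL2 : ∀ i, MemLp (W i) 2 P := fun i => (hG.eval i).memLp_two
  let L : (Fin p → ℝ) →L[ℝ] (Unit → ℝ) × (Fin p → ℝ) :=
    (ContinuousLinearMap.pi fun _ => ContinuousLinearMap.proj j).prod
      (ContinuousLinearMap.pi fun i => ContinuousLinearMap.proj i -
        cov[W j, W i; P] • ContinuousLinearMap.proj j)
  have h := HasGaussianLaw.indepFun_of_covariance_eval (P := P)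
    (X := fun (_ : Unit) => W j) (Y := fun i ω => W i ω - cov[W j, W i; P] * W j ω)
    (by
      have := hG.map_fun L
      simpa [L] using! this)
    (by
      intro _ i
      have hv : Var[W j; P] = 1 := by
        have := variance_map (X := id) (Y := W j) (μ := P) (by fun_prop) (hG.eval j).aemeasurable
        rw [hlaw j, variance_id_gaussianReal] at this
        simpa using this.symm
      have := covariance_fun_sub_right (X := W j) (Y := W i)
        (Z := fun ω => cov[W j, W i; P] * W j ω) (hL2 j) (hL2 i) ((hL2 j).const_mul _)
      rw [this, covariance_const_mul_right, covariance_self (hG.eval j).aemeasurable, hv]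
      ring)
  have hφ : Measurable (fun f : Unit → ℝ => f ()) := by fun_prop
  have hψ : Measurable (fun f : Fin p → ℝ => f) := by fun_prop
  exact h.comp hφ hψ

lemma aux_cov_le {Ω : Type*} [MeasurableSpace Ω] (P : Measure Ω) [IsProbabilityMeasure P]
    (p : ℕ) (W : Fin p → Ω → ℝ)
    (hG : HasGaussianLaw (fun ω => (W · ω)) P)
    (hlaw : ∀ j, P.map (W j) = gaussianReal 0 1) (i j : Fin p) :
    cov[W j, W i; P] ≤ 1 := by
  have hL2 : ∀ i, MemLp (W i) 2 P := fun i => (hG.eval i).memLp_two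
  have hv : ∀ j, Var[W j; P] = 1 := by
    intro j
    have := variance_map (X := id) (Y := W j) (μ := P) (by fun_prop) (hG.eval j).aemeasurable
    rw [hlaw j, variance_id_gaussianReal] at this
    simpa using this.symm
  have h := variance_sub (hL2 j) (hL2 i)
  have h0 := variance_nonneg (W j - W i) P
  rw [h, hv, hv] at h0
  linarith

lemma aux_key {Ω : Type*} [MeasurableSpace Ω] (P : Measure Ω) [IsProbabilityMeasure P]
    (p : ℕ) (W : Fin p → Ω → ℝ) (hm : ∀ j, Measurable (W j))
    (hG : HasGaussianLaw (fun ω => (W · ω)) P)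
    (hlaw : ∀ j, P.map (W j) = gaussianReal 0 1) (j : Fin p) :
    ∃ g : ℝ → ENNReal, Monotone g ∧ (∀ t, g t ≤ 1) ∧ ∀ A, MeasurableSet A →
      P {ω | W j ω ∈ A ∧ ∀ i, (i < j → W i ω < W j ω) ∧ W i ω ≤ W j ω}
        = ∫⁻ t in A, g t ∂(gaussianReal 0 1) := by
  set c : Fin p → ℝ := fun i => cov[W j, W i; P] with hc
  set V : Ω → Fin p → ℝ := fun ω i => W i ω - c i * W j ω with hV
  have hVm : Measurable V := by fun_prop
  have hind : IndepFun (W j) V P := aux_indep P p W hG hlaw j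
  have hc1 : ∀ i, c i ≤ 1 := fun i => aux_cov_le P p W hG hlaw i j
  have : IsProbabilityMeasure (P.map V) := Measure.isProbabilityMeasure_map hVm.aemeasurable
  refine ⟨fun t => P.map V {v | ∀ i, (i < j → v i + c i * t < t) ∧ v i + c i * t ≤ t},
    ?_, fun t => prob_le_one, ?_⟩
  · intro s t hst
    refine measure_mono fun v hv i => ?_
    have := mul_nonneg (sub_nonneg.2 (hc1 i)) (sub_nonneg.2 hst)
    refine ⟨fun hij => ?_, ?_⟩
    · have := (hv i).1 hij
      nlinarith
    · have := (hv i).2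
      nlinarith
  · intro A hA
    have hmap := (indepFun_iff_map_prod_eq_prod_map_map (hm j).aemeasurable hVm.aemeasurable).1 hind
    have hS0 : MeasurableSet {q : ℝ × (Fin p → ℝ) |
        ∀ i, (i < j → q.2 i + c i * q.1 < q.1) ∧ q.2 i + c i * q.1 ≤ q.1} := by
      simp only [Set.ofPred_forall, Set.ofPred_and]
      refine MeasurableSet.iInter fun i => MeasurableSet.inter
        (MeasurableSet.iInter fun _ => measurableSet_lt (by fun_prop) (by fun_prop))
        (measurableSet_le (by fun_prop) (by fun_prop))
    have hS : MeasurableSet ({q : ℝ × (Fin p → ℝ) | q.1 ∈ A} ∩ {q : ℝ × (Fin p → ℝ) |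
        ∀ i, (i < j → q.2 i + c i * q.1 < q.1) ∧ q.2 i + c i * q.1 ≤ q.1}) :=
      (measurable_fst hA).inter hS0
    have h1 : {ω | W j ω ∈ A ∧ ∀ i, (i < j → W i ω < W j ω) ∧ W i ω ≤ W j ω} =
        (fun ω => (W j ω, V ω)) ⁻¹' ({q : ℝ × (Fin p → ℝ) | q.1 ∈ A} ∩ {q : ℝ × (Fin p → ℝ) |
        ∀ i, (i < j → q.2 i + c i * q.1 < q.1) ∧ q.2 i + c i * q.1 ≤ q.1}) := by
      ext ω
      simp [hV]
    rw [h1, ← Measure.map_apply (by fun_prop) hS, hmap, Measure.prod_apply hS, hlaw j,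
      ← lintegral_indicator hA]
    congr 1
    ext t
    by_cases ht : t ∈ A <;> simp [ht, Set.preimage]

lemma aux_density {Ω : Type*} [MeasurableSpace Ω] (P : Measure Ω) [IsProbabilityMeasure P]
    (p : ℕ) (hp : 2 ≤ p) (W : Fin p → Ω → ℝ) (hm : ∀ j, Measurable (W j))
    (hG : HasGaussianLaw (fun ω => (W · ω)) P)
    (hlaw : ∀ j, P.map (W j) = gaussianReal 0 1) :
    ∃ G : ℝ → ENNReal, Monotone G ∧ (∀ t, G t ≤ p) ∧ ∀ A, MeasurableSet A →
      P {ω | (⨆ j, W j ω) ∈ A} = ∫⁻ t in A, G t ∂(gaussianReal 0 1) := by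
  choose g hg1 hg2 hg3 using aux_key P p W hm hG hlaw
  refine ⟨fun t => ∑ j, g j t, fun s t hst => Finset.sum_le_sum fun j _ => hg1 j hst,
    fun t => ?_, fun A hA => ?_⟩
  · calc ∑ j, g j t ≤ ∑ j : Fin p, 1 := Finset.sum_le_sum fun j _ => hg2 j t
      _ = p := by simp
  · rw [lintegral_finsetSum _ fun j _ => (hg1 j).measurable]
    simp_rw [← hg3 _ A hA]
    rw [← tsum_fintype (L := .unconditional _), ← measure_iUnion]
    · congr 1
      ext ω
      have : Nonempty (Fin p) := ⟨⟨0, by omega⟩⟩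
      have hb : BddAbove (Set.range fun j => W j ω) := Set.finite_range _ |>.bddAbove
      simp only [Set.mem_ofPred_eq, Set.mem_iUnion]
      constructor
      · intro h
        have hne : ({j | ∀ i, W i ω ≤ W j ω} : Set (Fin p)).Nonempty := by
          obtain ⟨j, hj⟩ := Finite.exists_max (fun j => W j ω)
          exact ⟨j, hj⟩
        obtain ⟨j, hj, hmin⟩ := WellFounded.has_min (r := (· < ·)) wellFounded_lt _ hne
        have hs : (⨆ j, W j ω) = W j ω := le_antisymm (ciSup_le hj) (le_ciSup hb j)
        refine ⟨j, hs ▸ h, fun i => ⟨fun hij => ?_, hj i⟩⟩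
        by_contra hcon
        exact hmin i (fun k => (hj k).trans (not_lt.1 hcon)) hij
      · rintro ⟨j, hA, hj⟩
        have hs : (⨆ j, W j ω) = W j ω :=
          le_antisymm (ciSup_le fun i => (hj i).2) (le_ciSup hb j)
        rwa [hs]
    · intro i j hij
      refine Set.disjoint_left.2 fun ω hi hj => ?_
      rcases lt_or_gt_of_ne hij with h | h
      · exact absurd ((hj.2 i).1 h) (not_lt.2 (hi.2 j).2)
      · exact absurd ((hi.2 j).1 h) (not_lt.2 (hj.2 i).2)
    · intro j
      simp only [Set.ofPred_forall, Set.ofPred_and]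
      exact (hm j hA).inter (MeasurableSet.iInter fun i => MeasurableSet.inter
        (MeasurableSet.iInter fun _ => measurableSet_lt (hm i) (hm j))
        (measurableSet_le (hm i) (hm j)))

lemma aux_pdf (t : ℝ) : gaussianPDFReal 0 1 t = (Real.sqrt (2 * Real.pi))⁻¹ * Real.exp (-t ^ 2 / 2) := by
  simp [gaussianPDFReal]

lemma aux_bound (p : ℕ) (hp : 2 ≤ p) (G : ℝ → ENNReal) (hG : Monotone G) (hGp : ∀ t, G t ≤ p)
    (h1 : ∫⁻ t, G t ∂(gaussianReal 0 1) ≤ 1) (t : ℝ) :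
    G t * gaussianPDF 0 1 t ≤ ENNReal.ofReal (6 * Real.sqrt (Real.log p)) := by
  set s := Real.sqrt (Real.log p) with hs
  have hp0 : (0 : ℝ) < p := by positivity
  have hlog : 0.69 ≤ Real.log p := by
    have h2 : Real.log 2 ≤ Real.log p := Real.log_le_log (by norm_num) (by exact_mod_cast hp)
    have := Real.log_two_gt_d9
    linarith
  have hs2 : s ^ 2 = Real.log p := Real.sq_sqrt (by linarith)
  have hs0 : 0.8 ≤ s := Real.le_sqrt_of_sq_le (by norm_num; linarith)
  have hGfin : G t ≠ ⊤ := ne_top_of_le_ne_top (by simp) (hGp t)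
  have hpi : (Real.sqrt (2 * Real.pi))⁻¹ ≤ 1 := by
    apply inv_le_one_of_one_le₀
    apply Real.le_sqrt_of_sq_le
    have := Real.pi_gt_three
    linarith
  have hpi0 : 0 ≤ (Real.sqrt (2 * Real.pi))⁻¹ := by positivity
  rcases le_or_gt t (Real.sqrt 2 * s) with ht | ht
  · -- Mills ratio
    set d := 1 / (2 * s) with hd
    have hd0 : 0 < d := by positivity
    have hsd : s * d = 1 / 2 := by rw [hd]; field_simp
    have hmain : ENNReal.ofReal (d * (gaussianPDFReal 0 1 t * Real.exp (-1))) * G t ≤ 1 := by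
      refine le_trans ?_ h1
      calc ENNReal.ofReal (d * (gaussianPDFReal 0 1 t * Real.exp (-1))) * G t
          = ∫⁻ _ in Set.Icc t (t + d),
              ENNReal.ofReal (gaussianPDFReal 0 1 t * Real.exp (-1)) * G t := by
            rw [lintegral_const, Measure.restrict_apply_univ, Real.volume_Icc,
              ENNReal.ofReal_mul hd0.le]
            simp only [add_sub_cancel_left]
            ring
        _ ≤ ∫⁻ u in Set.Icc t (t + d), gaussianPDF 0 1 u * G u := by
            refine setLIntegral_mono' measurableSet_Icc fun u hu => ?_
            refine mul_le_mul' (ENNReal.ofReal_le_ofReal ?_) (hG hu.1)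
            rw [aux_pdf, aux_pdf, mul_assoc, ← Real.exp_add]
            refine mul_le_mul_of_nonneg_left (Real.exp_le_exp.2 ?_) hpi0
            have hu1 := hu.1
            have hu2 := hu.2
            have h2 : Real.sqrt 2 ≤ 1.42 := Real.sqrt_le_iff.2 (by norm_num)
            have hd1 : d ≤ 0.625 := by
              rw [hd, div_le_iff₀ (by positivity)]; linarith
            have htd : t * d ≤ 0.71 := by
              calc t * d ≤ Real.sqrt 2 * s * d := by gcongr
                _ = Real.sqrt 2 * (1/2) := by rw [mul_assoc, hsd]
                _ ≤ _ := by linarith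
            -- u^2 - t^2 ≤ 2
            have hu3 : t * (u - t) ≤ 0.71 := by
              rcases le_or_gt t 0 with h | h
              · nlinarith
              · nlinarith
            nlinarith
        _ ≤ ∫⁻ u, gaussianPDF 0 1 u * G u := setLIntegral_le_lintegral _ _
        _ = ∫⁻ u, G u ∂(gaussianReal 0 1) := by
            rw [gaussianReal_of_var_ne_zero _ one_ne_zero,
              lintegral_withDensity_eq_lintegral_mul _ (measurable_gaussianPDF 0 1) hG.measurable]
            rfl
    rw [← ENNReal.ofReal_toReal hGfin] at hmain ⊢
    rw [← ENNReal.ofReal_mul (by positivity [gaussianPDFReal_nonneg 0 1 t]), ENNReal.ofReal_le_one] at hmain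
    rw [gaussianPDF, ← ENNReal.ofReal_mul ENNReal.toReal_nonneg]
    apply ENNReal.ofReal_le_ofReal
    set x := (G t).toReal * gaussianPDFReal 0 1 t with hx
    have hx0 : 0 ≤ x := mul_nonneg ENNReal.toReal_nonneg (gaussianPDFReal_nonneg _ _ _)
    have he : 1 / 3 ≤ Real.exp (-1) := by
      rw [Real.exp_neg, ← one_div]
      exact one_div_le_one_div_of_le (Real.exp_pos 1) (by have := Real.exp_one_lt_d9; linarith)
    have hm2 : d * x * Real.exp (-1) ≤ 1 := by
      rw [hx]; linarith
    have hm3 : d * x * (1 / 3) ≤ 1 :=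
      le_trans (mul_le_mul_of_nonneg_left he (by positivity)) hm2
    have : x = 2 * (s * d) * x := by rw [hsd]; ring
    nlinarith
  · calc G t * gaussianPDF 0 1 t ≤ (p : ENNReal) * ENNReal.ofReal (1 / p) := by
          refine mul_le_mul' (hGp t) (ENNReal.ofReal_le_ofReal ?_)
          rw [aux_pdf]
          have h3 : Real.exp (-t ^ 2 / 2) ≤ 1 / p := by
            rw [one_div, ← Real.exp_log hp0, ← Real.exp_neg, ← hs2]
            apply Real.exp_le_exp.2
            have h4 : (Real.sqrt 2 * s) ^ 2 ≤ t ^ 2 := by gcongr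
            rw [mul_pow, Real.sq_sqrt (by norm_num)] at h4
            linarith
          have := Real.exp_pos (-t ^ 2 / 2)
          nlinarith
      _ = ENNReal.ofReal 1 := by
          rw [← ENNReal.ofReal_natCast, ← ENNReal.ofReal_mul hp0.le]
          congr 1
          field_simp
      _ ≤ _ := ENNReal.ofReal_le_ofReal (by linarith)

lemma aux_unit {Ω : Type*} [MeasurableSpace Ω] (P : Measure Ω) [IsProbabilityMeasure P]
    (p : ℕ) (hp : 2 ≤ p) (W : Fin p → Ω → ℝ) (hm : ∀ j, Measurable (W j))
    (hG : HasGaussianLaw (fun ω => (W · ω)) P)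
    (hlaw : ∀ j, P.map (W j) = gaussianReal 0 1) (a b : ℝ) (hab : a ≤ b) :
    (P {ω | (⨆ j, W j ω) ∈ Set.Icc a b}).toReal ≤
      6 * Real.sqrt (Real.log p) * (b - a) := by
  obtain ⟨G, hG1, hG2, hG3⟩ := aux_density P p hp W hm hG hlaw
  have h1 : ∫⁻ t, G t ∂(gaussianReal 0 1) ≤ 1 := by
    have := hG3 Set.univ MeasurableSet.univ
    rw [setLIntegral_univ] at this
    rw [← this]
    exact prob_le_one
  apply ENNReal.toReal_le_of_le_ofReal (by have := sub_nonneg.2 hab; positivity)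
  rw [hG3 _ measurableSet_Icc, gaussianReal_of_var_ne_zero _ one_ne_zero,
    setLIntegral_withDensity_eq_setLIntegral_mul _ (measurable_gaussianPDF 0 1) hG1.measurable
      measurableSet_Icc]
  calc _ ≤ ∫⁻ _ in Set.Icc a b, ENNReal.ofReal (6 * Real.sqrt (Real.log p)) := by
        refine lintegral_mono fun t => ?_
        simp only [Pi.mul_apply]
        rw [mul_comm]
        exact aux_bound p hp G hG1 hG2 h1 t
    _ = _ := by
        rw [lintegral_const, Measure.restrict_apply_univ, Real.volume_Icc,
          ← ENNReal.ofReal_mul (by positivity)]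

/-- **Gaussian max anti-concentration** (Chernozhukov–Chetverikov–Kato).
Let `(Z₁, …, Z_p)` be a centered Gaussian vector (every linear combination is
a centered Gaussian) with `E[Z_j²] = σ²` for all `j` and `p ≥ 2`. Then for
every `ε > 0`, `sup_x P(max_j Z_j ∈ [x-ε, x+ε]) ≤ 12 ε √(log p) / σ`. -/
theorem gaussian_max_anticoncentration
    {Ω : Type*} [MeasurableSpace Ω] (P : Measure Ω) [IsProbabilityMeasure P]
    (p : ℕ) (hp : 2 ≤ p) (Z : Fin p → Ω → ℝ)
    (hmeas : ∀ j, Measurable (Z j))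
    -- (Z₁, …, Z_p) is a centered Gaussian vector: every linear combination
    -- has a centered Gaussian distribution
    (hgauss : ∀ c : Fin p → ℝ, ∃ v : NNReal,
      Measure.map (fun ω => ∑ j, c j * Z j ω) P = gaussianReal 0 v)
    (σ : ℝ) (hσ : 0 < σ)
    (hvar : ∀ j, ∫ ω, (Z j ω) ^ 2 ∂P = σ ^ 2) :
    ∀ ε > (0 : ℝ), ∀ x : ℝ,
      (P {ω | (⨆ j, Z j ω) ∈ Set.Icc (x - ε) (x + ε)}).toReal ≤
        12 * ε * Real.sqrt (Real.log p) / σ := by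
  intro ε hε x
  have hlin : ∀ c : Fin p → ℝ, Measurable (fun ω => ∑ j, c j * Z j ω) := fun c => by fun_prop
  set W : Fin p → Ω → ℝ := fun j ω => Z j ω / σ with hW
  have hWm : ∀ j, Measurable (W j) := fun j => (hmeas j).div_const σ
  have hG : HasGaussianLaw (fun ω => (W · ω)) P := by
    refine ⟨isGaussian_of_map_eq_gaussianReal fun L => ?_⟩
    obtain ⟨v, hv⟩ := hgauss (fun j => L (Pi.single j 1) / σ)
    refine ⟨0, v, ?_⟩
    rw [Measure.map_map (by fun_prop) (by fun_prop), ← hv]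
    congr 1
    ext ω
    simp only [Function.comp_apply]
    have hdec : (fun j => W j ω) = ∑ j, (Pi.single j (W j ω) : Fin p → ℝ) :=
      (Finset.univ_sum_single _).symm
    rw [hdec, map_sum]
    refine Finset.sum_congr rfl fun j _ => ?_
    have : (Pi.single j (W j ω) : Fin p → ℝ) = W j ω • Pi.single j (1 : ℝ) := by
      rw [← Pi.single_smul]; simp
    rw [this, map_smul, hW]
    simp only [smul_eq_mul]
    ring
  have hlaw : ∀ j, P.map (W j) = gaussianReal 0 1 := by
    intro j
    obtain ⟨v, hv⟩ := hgauss (Pi.single j σ⁻¹)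
    have hWj : (fun ω => ∑ i, (Pi.single j σ⁻¹ : Fin p → ℝ) i * Z i ω) = W j := by
      ext ω
      simp [hW, Pi.single_apply, div_eq_inv_mul]
    rw [hWj] at hv
    have hvv : (v : ℝ) = 1 := by
      have h1 := variance_map (X := id) (Y := W j) (μ := P) (by fun_prop) (hWm j).aemeasurable
      rw [hv, variance_id_gaussianReal] at h1
      have h2 : ∫ ω, W j ω ∂P = 0 := by
        have := integral_map (μ := P) (φ := W j) (hWm j).aemeasurable (f := fun y => y)
          (by fun_prop)
        rw [hv, integral_id_gaussianReal] at this
        exact this.symm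
      rw [h1, Function.id_comp, variance_of_integral_eq_zero (hWm j).aemeasurable h2]
      have : ∀ ω, W j ω ^ 2 = Z j ω ^ 2 / σ ^ 2 := fun ω => by simp [hW, div_pow]
      simp_rw [this]
      rw [integral_div, hvar j]
      field_simp
    rw [hv]
    congr 1
    exact_mod_cast hvv
  have key := aux_unit P p hp W hWm hG hlaw ((x - ε) / σ) ((x + ε) / σ) (by gcongr; linarith)
  have hset : {ω | (⨆ j, Z j ω) ∈ Set.Icc (x - ε) (x + ε)} =
      {ω | (⨆ j, W j ω) ∈ Set.Icc ((x - ε) / σ) ((x + ε) / σ)} := by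
    ext ω
    have : (⨆ j, W j ω) = (⨆ j, Z j ω) / σ := by
      simp only [hW, div_eq_mul_inv]
      exact (Real.iSup_mul_of_nonneg (by positivity) _).symm
    simp only [Set.mem_ofPred_eq, Set.mem_Icc, this, div_le_div_iff_of_pos_right hσ]
  rw [hset]
  refine key.trans (le_of_eq ?_)
  field_simp
  ring
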